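/- Suppose β_t ≥ 0 pointwise for all t, {η_t}_{t≥1} is a predictable process with η_t ≥ 1 for all t, and there is a non-random number G < 1 such that Ñ_t ≥ G almost surely for all t. Then the sub-net wealth process {Ñ_t} is a (1 − G, G)-sequential tail evidence against P: for all x > G, P(sup_t Ñ_t ≥ x) ≤ (1 − G)/(x − G). -/

import Mathlib

open MeasureTheory
open scoped ProbabilityTheory

/-!
The net wealth `W_t - ∑_{i ≤ t} β_i` has increments `(W_t + β_{t+1}) λ_{t+1} X_{t+1}`, a
predictable bet on a fair outcome, so it is a martingale. Inflating the liabilities by factors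
`η_i ≥ 1` subtracts a nondecreasing adapted process, and what remains is a supermartingale. Shifted
by its lower bound `G` it is nonnegative, so Ville's inequality bounds the probability that it ever
reaches a level `y > G`. A supremum `≥ x` need not be attained, but it forces every level `y < x` to
be reached; let `y ↑ x`.
-/

section Ville

variable {Ω : Type*} {mΩ : MeasurableSpace Ω} {μ : Measure Ω} {ℱ : Filtration ℕ mΩ} {N : ℕ → Ω → ℝ}

lemma integral_stoppedValue_le_of_supermartingale [SigmaFiniteFiltration μ ℱ]
    (hN : Supermartingale N ℱ μ) {τ : Ω → ℕ∞} (hτ : IsStoppingTime ℱ τ) {n : ℕ}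
    (hτn : ∀ ω, τ ω ≤ n) : μ[stoppedValue N τ] ≤ μ[N 0] := by
  have h := hN.neg.expected_stoppedValue_mono (isStoppingTime_const ℱ 0) hτ (fun _ => zero_le) hτn
  rwa [stoppedValue_const, show stoppedValue (-N) τ = -stoppedValue N τ from rfl, Pi.neg_apply,
    integral_neg', integral_neg', neg_le_neg_iff] at h

lemma measure_ge_le_ofReal_integral_div {f : Ω → ℝ} (hf : Integrable f μ) (hf0 : 0 ≤ᵐ[μ] f) {c : ℝ}
    (hc : 0 < c) : μ {ω | c ≤ f ω} ≤ ENNReal.ofReal (μ[f] / c) := by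
  rw [ENNReal.ofReal_div_of_pos hc, ofReal_integral_eq_lintegral_ofReal hf hf0]
  calc μ {ω | c ≤ f ω}
      ≤ μ {ω | ENNReal.ofReal c ≤ ENNReal.ofReal (f ω)} :=
        measure_mono fun _ hω => ENNReal.ofReal_le_ofReal hω
    _ ≤ _ := meas_ge_le_lintegral_div hf.aemeasurable.ennreal_ofReal
        (ENNReal.ofReal_pos.2 hc).ne' ENNReal.ofReal_ne_top

lemma ville_inequality_finite_horizon [SigmaFiniteFiltration μ ℱ] (hN : Supermartingale N ℱ μ)
    (hN0 : ∀ t, 0 ≤ᵐ[μ] N t) {c : ℝ} (hc : 0 < c) (n : ℕ) :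
    μ {ω | ∃ t ≤ n, c ≤ N t ω} ≤ ENNReal.ofReal (μ[N 0] / c) := by
  let τ : Ω → ℕ∞ := fun ω => (hittingBtwn N (Set.Ici c) 0 n ω : ℕ)
  have hτ : IsStoppingTime ℱ τ :=
    hN.stronglyAdapted.adapted.isStoppingTime_hittingBtwn measurableSet_Ici
  have hτn : ∀ ω, τ ω ≤ n := fun ω => Nat.cast_le.2 (hittingBtwn_le ω)
  have hit : {ω | ∃ t ≤ n, c ≤ N t ω} ⊆ {ω | c ≤ stoppedValue N τ ω} := by
    rintro ω ⟨t, ht, hct⟩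
    exact hittingBtwn_mem_set (s := Set.Ici c) ⟨t, ⟨t.zero_le, ht⟩, hct⟩
  have hint : Integrable (stoppedValue N τ) μ := integrable_stoppedValue ℕ hτ hN.integrable hτn
  have hnonneg : 0 ≤ᵐ[μ] stoppedValue N τ := by
    filter_upwards [ae_all_iff.2 hN0] with ω hω using hω _
  calc μ {ω | ∃ t ≤ n, c ≤ N t ω}
      ≤ μ {ω | c ≤ stoppedValue N τ ω} := measure_mono hit
    _ ≤ ENNReal.ofReal (μ[stoppedValue N τ] / c) :=
        measure_ge_le_ofReal_integral_div hint hnonneg hc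
    _ ≤ ENNReal.ofReal (μ[N 0] / c) := ENNReal.ofReal_le_ofReal <|
        div_le_div_of_nonneg_right (integral_stoppedValue_le_of_supermartingale hN hτ hτn) hc.le

lemma ville_inequality [SigmaFiniteFiltration μ ℱ] (hN : Supermartingale N ℱ μ)
    (hN0 : ∀ t, 0 ≤ᵐ[μ] N t) {c : ℝ} (hc : 0 < c) :
    μ {ω | ∃ t, c ≤ N t ω} ≤ ENNReal.ofReal (μ[N 0] / c) := by
  have hmono : Monotone fun n : ℕ => {ω | ∃ t ≤ n, c ≤ N t ω} :=
    fun _ _ hmn _ ⟨t, ht, hct⟩ => ⟨t, ht.trans hmn, hct⟩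
  have hunion : {ω | ∃ t, c ≤ N t ω} = ⋃ n : ℕ, {ω | ∃ t ≤ n, c ≤ N t ω} := by
    ext ω
    simp only [Set.mem_iUnion, Set.mem_ofPred_eq]
    exact ⟨fun ⟨t, hct⟩ => ⟨t, t, le_rfl, hct⟩, fun ⟨_, t, _, hct⟩ => ⟨t, hct⟩⟩
  rw [hunion, hmono.measure_iUnion]
  exact iSup_le (ville_inequality_finite_horizon hN hN0 hc)

end Ville

section TailEvidence

variable {Ω : Type*} {mΩ : MeasurableSpace Ω} {μ : Measure Ω} {ℱ : Filtration ℕ mΩ} {N : ℕ → Ω → ℝ}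
  {a G : ℝ}

/-- `N` is an `(a, G)`-sequential tail evidence against `μ`: `μ (sup_t N_t ≥ x) ≤ a / (x - G)` for
all `x > G`. The supremum is taken in `EReal`, since in `ℝ` that of an unbounded path is `0`. -/
def IsSequentialTailEvidence (a G : ℝ) (N : ℕ → Ω → ℝ) (μ : Measure Ω) : Prop :=
  ∀ x : ℝ, G < x → μ {ω | (x : EReal) ≤ ⨆ t, (N t ω : EReal)} ≤ ENNReal.ofReal (a / (x - G))

lemma isSequentialTailEvidence_of_measure_exists_le
    (h : ∀ y : ℝ, G < y → μ {ω | ∃ t, y ≤ N t ω} ≤ ENNReal.ofReal (a / (y - G))) :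
    IsSequentialTailEvidence a G N μ := by
  intro x hx
  have hlevel : ∀ y < x, {ω | (x : EReal) ≤ ⨆ t, (N t ω : EReal)} ⊆ {ω | ∃ t, y ≤ N t ω} := by
    intro y hyx ω hω
    obtain ⟨t, ht⟩ := lt_iSup_iff.1 ((EReal.coe_lt_coe hyx).trans_le hω)
    exact ⟨t, (EReal.coe_lt_coe_iff.1 ht).le⟩
  have hcont : ContinuousAt (fun y : ℝ => ENNReal.ofReal (a / (y - G))) x :=
    ENNReal.continuous_ofReal.continuousAt.comp
      (continuousAt_const.div (continuousAt_id.sub continuousAt_const) (sub_pos.2 hx).ne')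
  refine ge_of_tendsto (hcont.tendsto.mono_left (nhdsWithin_le_nhds (s := Set.Iio x))) ?_
  filter_upwards [Ioo_mem_nhdsLT hx] with y hy
  exact (measure_mono (hlevel y hy.2)).trans (h y hy.1)

lemma isSequentialTailEvidence_of_supermartingale [IsProbabilityMeasure μ]
    (hN : Supermartingale N ℱ μ) (hlb : ∀ t, ∀ᵐ ω ∂μ, G ≤ N t ω) :
    IsSequentialTailEvidence (μ[N 0] - G) G N μ := by
  refine isSequentialTailEvidence_of_measure_exists_le fun y hy => ?_
  let shifted : ℕ → Ω → ℝ := fun t ω => N t ω - G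
  have hsuper : Supermartingale shifted ℱ μ := hN.sub_martingale (martingale_const ℱ μ G)
  have hnonneg : ∀ t, 0 ≤ᵐ[μ] shifted t := fun t => (hlb t).mono fun _ hω => sub_nonneg.2 hω
  have hmean : μ[shifted 0] = μ[N 0] - G := by
    rw [integral_sub (hN.integrable 0) (integrable_const G), integral_const, probReal_univ,
      one_smul]
  simpa only [hmean, shifted, sub_le_sub_iff_right] using
    ville_inequality hsuper hnonneg (sub_pos.2 hy)

end TailEvidence

section Liabilities

variable {Ω : Type*} {mΩ : MeasurableSpace Ω} {μ : Measure Ω} {ℱ : Filtration ℕ mΩ}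
  {c : ℕ → Ω → ℝ}

/-- Cumulative liabilities `c_1 + ⋯ + c_t` for charges `c_1, c_2, …`. With `c = β` they are the
borrowed amounts, with `c = η β` the sub-liabilities; the value `c 0` is never used. -/
def liabilities (c : ℕ → Ω → ℝ) (t : ℕ) : Ω → ℝ :=
  ∑ i ∈ Finset.range t, c (i + 1)

lemma liabilities_zero : liabilities c 0 = 0 :=
  Finset.sum_range_zero _

lemma liabilities_succ (t : ℕ) : liabilities c (t + 1) = liabilities c t + c (t + 1) :=
  Finset.sum_range_succ _ t

lemma liabilities_sub (c d : ℕ → Ω → ℝ) : liabilities (c - d) = liabilities c - liabilities d :=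
  funext fun _ => Finset.sum_sub_distrib _ _

lemma stronglyAdapted_liabilities (hc : ∀ t, StronglyMeasurable[ℱ (t + 1)] (c (t + 1))) :
    StronglyAdapted ℱ (liabilities c) := fun _ =>
  Finset.stronglyMeasurable_sum _ fun i hi =>
    (hc i).mono (ℱ.mono (Nat.succ_le_of_lt (Finset.mem_range.1 hi)))

lemma integrable_liabilities (hc : ∀ t, Integrable (c (t + 1)) μ) (t : ℕ) :
    Integrable (liabilities c t) μ :=
  integrable_finsetSum' _ fun i _ => hc i

lemma submartingale_liabilities [IsFiniteMeasure μ]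
    (hc_adapt : ∀ t, StronglyMeasurable[ℱ (t + 1)] (c (t + 1)))
    (hc_int : ∀ t, Integrable (c (t + 1)) μ) (hc_nonneg : ∀ t, 0 ≤ᵐ[μ] c (t + 1)) :
    Submartingale (liabilities c) ℱ μ := by
  refine submartingale_of_condExp_sub_nonneg_nat (stronglyAdapted_liabilities hc_adapt)
    (integrable_liabilities hc_int) fun t => ?_
  rw [liabilities_succ, add_sub_cancel_left]
  exact condExp_nonneg (hc_nonneg t)

end Liabilities

section Wealth

variable {Ω : Type*} {mΩ : MeasurableSpace Ω} {μ : Measure Ω} {ℱ : Filtration ℕ mΩ}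
  {X lam β c W : ℕ → Ω → ℝ}

lemma stronglyAdapted_wealth (hW0 : StronglyMeasurable[ℱ 0] (W 0))
    (hX : ∀ t, StronglyMeasurable[ℱ (t + 1)] (X (t + 1)))
    (hlam : ∀ t, StronglyMeasurable[ℱ t] (lam (t + 1)))
    (hβ : ∀ t, StronglyMeasurable[ℱ t] (β (t + 1)))
    (hW : ∀ t, W (t + 1) = (W t + β (t + 1)) * (1 + lam (t + 1) * X (t + 1))) :
    StronglyAdapted ℱ W := by
  intro t
  induction t with
  | zero => exact hW0
  | succ t ih =>
    have hle : ℱ t ≤ ℱ (t + 1) := ℱ.mono t.le_succ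
    rw [hW]
    exact ((ih.add (hβ t)).mono hle).mul
      (stronglyMeasurable_one.add (((hlam t).mono hle).mul (hX t)))

lemma integrable_of_integrable_mul_of_one_le {f g : Ω → ℝ} (hf : AEStronglyMeasurable f μ)
    (hg : ∀ᵐ ω ∂μ, 1 ≤ g ω) (hgf : Integrable (g * f) μ) : Integrable f μ := by
  refine hgf.mono hf (hg.mono fun ω hω => ?_)
  rw [Pi.mul_apply, norm_mul]
  exact le_mul_of_one_le_left (norm_nonneg _) (hω.trans (Real.le_norm_self _))

lemma integrable_wealth (hW0 : Integrable (W 0) μ)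
    (hX : ∀ t, MemLp (X (t + 1)) ⊤ μ) (hlam : ∀ t, MemLp (lam (t + 1)) ⊤ μ)
    (hβ : ∀ t, Integrable (β (t + 1)) μ)
    (hW : ∀ t, W (t + 1) = (W t + β (t + 1)) * (1 + lam (t + 1) * X (t + 1))) (t : ℕ) :
    Integrable (W t) μ := by
  induction t with
  | zero => exact hW0
  | succ t ih =>
    have hreturn : MemLp (lam (t + 1) * X (t + 1)) ⊤ μ := (hX t).mul (hlam t)
    have hgrowth : MemLp (1 + lam (t + 1) * X (t + 1)) ⊤ μ := (memLp_top_const (1 : ℝ)).add hreturn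
    rw [hW]
    exact (ih.add (hβ t)).mul_of_top_left hgrowth

lemma martingale_netWealth [IsFiniteMeasure μ] (hX_int : ∀ t, Integrable (X (t + 1)) μ)
    (hX_cond : ∀ t, μ[X (t + 1) | ℱ t] =ᵐ[μ] 0)
    (hlam_pred : ∀ t, StronglyMeasurable[ℱ t] (lam (t + 1)))
    (hβ_pred : ∀ t, StronglyMeasurable[ℱ t] (β (t + 1))) (hβ_int : ∀ t, Integrable (β (t + 1)) μ)
    (hW_adapt : StronglyAdapted ℱ W) (hW_int : ∀ t, Integrable (W t) μ)
    (hW : ∀ t, W (t + 1) = (W t + β (t + 1)) * (1 + lam (t + 1) * X (t + 1))) :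
    Martingale (W - liabilities β) ℱ μ := by
  have hint : ∀ t, Integrable ((W - liabilities β) t) μ := fun t =>
    (hW_int t).sub (integrable_liabilities hβ_int t)
  refine martingale_of_condExp_sub_eq_zero_nat (hW_adapt.sub (stronglyAdapted_liabilities
    fun t => (hβ_pred t).mono (ℱ.mono t.le_succ))) hint fun t => ?_
  have hgain : (W - liabilities β) (t + 1) - (W - liabilities β) t
      = ((W t + β (t + 1)) * lam (t + 1)) * X (t + 1) := by
    simp only [Pi.sub_apply, hW, liabilities_succ]
    ring
  have hgain_int : Integrable (((W t + β (t + 1)) * lam (t + 1)) * X (t + 1)) μ :=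
    hgain ▸ (hint (t + 1)).sub (hint t)
  have hstake : StronglyMeasurable[ℱ t] ((W t + β (t + 1)) * lam (t + 1)) :=
    ((hW_adapt t).add (hβ_pred t)).mul (hlam_pred t)
  rw [hgain]
  filter_upwards [condExp_mul_of_stronglyMeasurable_left hstake hgain_int (hX_int t), hX_cond t]
    with ω hpull hfair
  rw [hpull, Pi.mul_apply, hfair, Pi.zero_apply, mul_zero]

lemma supermartingale_sub_liabilities [IsFiniteMeasure μ]
    (hM : Martingale (W - liabilities β) ℱ μ)
    (hβ_adapt : ∀ t, StronglyMeasurable[ℱ (t + 1)] (β (t + 1)))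
    (hβ_int : ∀ t, Integrable (β (t + 1)) μ)
    (hc_adapt : ∀ t, StronglyMeasurable[ℱ (t + 1)] (c (t + 1)))
    (hc_int : ∀ t, Integrable (c (t + 1)) μ) (hβc : ∀ t, β (t + 1) ≤ᵐ[μ] c (t + 1)) :
    Supermartingale (W - liabilities c) ℱ μ := by
  have hexcess : Submartingale (liabilities (c - β)) ℱ μ :=
    submartingale_liabilities (fun t => (hc_adapt t).sub (hβ_adapt t))
      (fun t => (hc_int t).sub (hβ_int t)) fun t => (hβc t).mono fun _ hω => sub_nonneg.2 hω
  simpa only [liabilities_sub, sub_sub_sub_cancel_right, sub_sub, add_sub_cancel] using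
    hM.supermartingale.sub_submartingale hexcess

end Wealth

theorem sub_net_wealth_sequential_tail_evidence_general
    {Ω : Type*} {mΩ : MeasurableSpace Ω} {μ : Measure Ω} [IsProbabilityMeasure μ]
    {ℱ : Filtration ℕ mΩ} {X lam β c W : ℕ → Ω → ℝ} {G : ℝ}
    (hX_meas : ∀ t, StronglyMeasurable[ℱ (t + 1)] (X (t + 1)))
    (hX_int : ∀ t, Integrable (X (t + 1)) μ)
    (hX_cond : ∀ t, μ[X (t + 1) | ℱ t] =ᵐ[μ] 0)
    (hlam_pred : ∀ t, StronglyMeasurable[ℱ t] (lam (t + 1)))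
    (hβ_pred : ∀ t, StronglyMeasurable[ℱ t] (β (t + 1)))
    (hβ_int : ∀ t, Integrable (β (t + 1)) μ)
    (hc_adapt : ∀ t, StronglyMeasurable[ℱ (t + 1)] (c (t + 1)))
    (hc_int : ∀ t, Integrable (c (t + 1)) μ)
    (hβc : ∀ t, β (t + 1) ≤ᵐ[μ] c (t + 1))
    (hW0 : StronglyMeasurable[ℱ 0] (W 0))
    (hW : ∀ t, W (t + 1) = (W t + β (t + 1)) * (1 + lam (t + 1) * X (t + 1)))
    (hW_int : ∀ t, Integrable (W t) μ)
    (hlb : ∀ t, ∀ᵐ ω ∂μ, G ≤ (W - liabilities c) t ω) :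
    IsSequentialTailEvidence (μ[W 0] - G) G (W - liabilities c) μ := by
  have hmart : Martingale (W - liabilities β) ℱ μ :=
    martingale_netWealth hX_int hX_cond hlam_pred hβ_pred hβ_int
      (stronglyAdapted_wealth hW0 hX_meas hlam_pred hβ_pred hW) hW_int hW
  have hsuper : Supermartingale (W - liabilities c) ℱ μ :=
    supermartingale_sub_liabilities hmart (fun t => (hβ_pred t).mono (ℱ.mono t.le_succ)) hβ_int
      hc_adapt hc_int hβc
  have hinit : (W - liabilities c) 0 = W 0 := by
    rw [Pi.sub_apply, liabilities_zero, sub_zero]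
  simpa only [hinit] using isSequentialTailEvidence_of_supermartingale hsuper hlb

/-- If the sub-net wealth process is a.s. bounded below by `G < 1` at every time, then it
is a `(1 - G, G)`-sequential tail evidence against `P`. -/
theorem sub_net_wealth_sequential_tail_evidence
    {Ω : Type*} {mΩ : MeasurableSpace Ω} {μ : Measure Ω} [IsProbabilityMeasure μ]
    (ℱ : Filtration ℕ mΩ)
    (X lam β η W Ntilde : ℕ → Ω → ℝ)
    (hX_val : ∀ t ω, X (t + 1) ω = 1 ∨ X (t + 1) ω = -1)
    (hX_meas : ∀ t, StronglyMeasurable[ℱ (t + 1)] (X (t + 1)))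
    (hX_cond : ∀ t, μ[X (t + 1) | ℱ t] =ᵐ[μ] 0)
    (hlam_pred : ∀ t, StronglyMeasurable[ℱ t] (lam (t + 1)))
    (hlam_bdd : ∀ t ω, lam (t + 1) ω ∈ Set.Icc (-1 : ℝ) 1)
    (hβ_pred : ∀ t, StronglyMeasurable[ℱ t] (β (t + 1)))
    (hβ_nonneg : ∀ t ω, 0 ≤ β (t + 1) ω)
    (hη_pred : ∀ t, StronglyMeasurable[ℱ t] (η (t + 1)))
    (hη_ge_one : ∀ t ω, 1 ≤ η (t + 1) ω)
    (hηβ_int : ∀ t, Integrable (fun ω => η (t + 1) ω * β (t + 1) ω) μ)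
    (hW0 : ∀ ω, W 0 ω = 1)
    (hW : ∀ t ω, W (t + 1) ω = (W t ω + β (t + 1) ω) * (1 + lam (t + 1) ω * X (t + 1) ω))
    (hNtilde : ∀ t ω, Ntilde t ω = W t ω - ∑ i ∈ Finset.range t, η (i + 1) ω * β (i + 1) ω)
    (G : ℝ) (hG : G < 1)
    (hNtilde_lb : ∀ t, ∀ᵐ ω ∂μ, G ≤ Ntilde t ω) :
    ∀ x : ℝ, G < x →
      μ {ω | (x : EReal) ≤ ⨆ t, (Ntilde t ω : EReal)} ≤
        ENNReal.ofReal ((1 - G) / (x - G)) := by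
  have hX_Linfty : ∀ t, MemLp (X (t + 1)) ⊤ μ := fun t =>
    memLp_top_of_bound ((hX_meas t).mono (ℱ.le _)).aestronglyMeasurable 1 <| .of_forall fun ω =>
      ((abs_eq zero_le_one).2 (hX_val t ω)).le
  have hlam_Linfty : ∀ t, MemLp (lam (t + 1)) ⊤ μ := fun t =>
    memLp_top_of_bound ((hlam_pred t).mono (ℱ.le t)).aestronglyMeasurable 1 <| .of_forall fun ω =>
      abs_le.2 (hlam_bdd t ω)
  have hβ_int : ∀ t, Integrable (β (t + 1)) μ := fun t =>
    integrable_of_integrable_mul_of_one_le ((hβ_pred t).mono (ℱ.le t)).aestronglyMeasurable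
      (.of_forall (hη_ge_one t)) (hηβ_int t)
  have hW_eq : ∀ t, W (t + 1) = (W t + β (t + 1)) * (1 + lam (t + 1) * X (t + 1)) :=
    fun t => funext (hW t)
  have hW0_eq : W 0 = fun _ => 1 := funext hW0
  have hW0_mean : μ[W 0] = 1 := by rw [hW0_eq, integral_const, probReal_univ, one_smul]
  have hN : Ntilde = W - liabilities (η * β) := by
    funext t ω
    simp only [hNtilde, liabilities, Pi.sub_apply, Finset.sum_apply, Pi.mul_apply]
  suffices h : IsSequentialTailEvidence (μ[W 0] - G) G Ntilde μ by rwa [hW0_mean] at h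
  subst hN
  exact sub_net_wealth_sequential_tail_evidence_general hX_meas
    (fun t => (hX_Linfty t).integrable le_top) hX_cond hlam_pred hβ_pred hβ_int
    (fun t => ((hη_pred t).mul (hβ_pred t)).mono (ℱ.mono t.le_succ)) hηβ_int
    (fun t => .of_forall fun ω => le_mul_of_one_le_left (hβ_nonneg t ω) (hη_ge_one t ω))
    (hW0_eq ▸ stronglyMeasurable_const) hW_eq
    (integrable_wealth (hW0_eq ▸ integrable_const 1) hX_Linfty hlam_Linfty hβ_int hW_eq) hNtilde_lb
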